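/- arXiv:2511.06207 — 7 statements merged into one kernel-verified Lean document; each statement's English description precedes it below -/
import Mathlib

section
/- Let (T_i)_{i=1}^∞ be a sequence of bounded linear operators from a Banach space X to a normed linear space Y. Then either (T_i)_{i=1}^∞ is mean equicontinuous or (T_i)_{i=1}^∞ is mean sensitive (exactly one of the two holds, since the two notions are mutually exclusive when X is nonzero). -/
open Filter Topology

variable {X Y : Type*} [NormedAddCommGroup X] [NormedSpace ℝ X]
  [NormedAddCommGroup Y] [NormedSpace ℝ Y]

/-- The Cesàro average `(1/n) ∑_{i=1}^{n} ‖T i x - T i y‖`. -/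
noncomputable def mavg (T : ℕ → X →L[ℝ] Y) (x y : X) (n : ℕ) : ℝ :=
  (∑ i ∈ Finset.Icc 1 n, ‖T i x - T i y‖) / n

/-- The Cesàro average `(1/n) ∑_{i=1}^{n} ‖T i x‖`. -/
noncomputable def avg (T : ℕ → X →L[ℝ] Y) (x : X) (n : ℕ) : ℝ :=
  (∑ i ∈ Finset.Icc 1 n, ‖T i x‖) / n

/-- `limsup_n (1/n) ∑_{i=1}^{n} ‖T i x - T i y‖`, computed in `EReal`. -/
noncomputable def msup (T : ℕ → X →L[ℝ] Y) (x y : X) : EReal :=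
  Filter.limsup (fun n => (mavg T x y n : EReal)) Filter.atTop

/-- `liminf_n (1/n) ∑_{i=1}^{n} ‖T i x - T i y‖`, computed in `EReal`. -/
noncomputable def minf (T : ℕ → X →L[ℝ] Y) (x y : X) : EReal :=
  Filter.liminf (fun n => (mavg T x y n : EReal)) Filter.atTop

/-- `limsup_n (1/n) ∑_{i=1}^{n} ‖T i x‖`, computed in `EReal`. -/
noncomputable def asup (T : ℕ → X →L[ℝ] Y) (x : X) : EReal :=
  Filter.limsup (fun n => (avg T x n : EReal)) Filter.atTop

/-- `liminf_n (1/n) ∑_{i=1}^{n} ‖T i x‖`, computed in `EReal`. -/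
noncomputable def ainf (T : ℕ → X →L[ℝ] Y) (x : X) : EReal :=
  Filter.liminf (fun n => (avg T x n : EReal)) Filter.atTop

/-- Mean equicontinuity of the sequence `(T i)`. -/
def MeanEquicontinuous (T : ℕ → X →L[ℝ] Y) : Prop :=
  ∀ ε : ℝ, 0 < ε → ∃ δ : ℝ, 0 < δ ∧ ∀ x y : X, ‖x - y‖ < δ → msup T x y < (ε : EReal)

/-- Mean sensitivity of the sequence `(T i)`. -/
def MeanSensitive (T : ℕ → X →L[ℝ] Y) : Prop :=
  ∃ δ : ℝ, 0 < δ ∧ ∀ x : X, ∀ ε : ℝ, 0 < ε →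
    ∃ y : X, ‖x - y‖ < ε ∧ (δ : EReal) < msup T x y

/-- **Dichotomy between mean equicontinuity and mean sensitivity.**
A sequence of bounded linear operators from a Banach space `X` to a normed space `Y`
is either mean equicontinuous or mean sensitive; moreover, if `X` is nonzero, the
two notions are mutually exclusive, so exactly one of them holds. -/
theorem meanEquicontinuous_or_meanSensitive [CompleteSpace X] (T : ℕ → X →L[ℝ] Y) :
    (MeanEquicontinuous T ∨ MeanSensitive T) ∧
      ((∃ x : X, x ≠ 0) → ¬ (MeanEquicontinuous T ∧ MeanSensitive T)) := by
  refine ⟨?_, ?_⟩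
  · by_cases h : MeanEquicontinuous T
    · exact Or.inl h
    · right
      unfold MeanEquicontinuous at h
      push Not at h
      obtain ⟨ε, hε, h⟩ := h
      refine ⟨ε / 2, half_pos hε, fun x η hη => ?_⟩
      obtain ⟨u, v, huv, hm⟩ := h η hη
      refine ⟨x - (u - v), by simpa using huv, ?_⟩
      have key : msup T x (x - (u - v)) = msup T u v := by
        simp [msup, mavg, map_sub]
      rw [key]
      exact lt_of_lt_of_le (EReal.coe_lt_coe_iff.2 (half_lt_self hε)) hm
  · rintro - ⟨he, δ, hδ, hs⟩
    obtain ⟨η, hη, h⟩ := he δ hδ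
    obtain ⟨y, hy, hm⟩ := hs 0 η hη
    exact lt_asymm hm (h 0 y hy)
end

section
/- Let (T_i)_{i=1}^∞ be a sequence of bounded linear operators from a Banach space X to a normed linear space Y. The following are equivalent: (1) (T_i) is mean equicontinuous; (2) for every x∈X, sup_{n∈ℕ} (1/n)∑_{i=1}^n ‖T_i x‖ < ∞; (3) (T_i) is absolutely Cesàro bounded; (4) for every ε>0 there exists δ>0 such that for all x,y∈X with ‖x−y‖<δ, sup_{n∈ℕ} (1/n)∑_{i=1}^n ‖T_i x − T_i y‖ < ε. -/
open Filter Topology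

variable {X Y : Type*} [NormedAddCommGroup X] [NormedSpace ℝ X]
  [NormedAddCommGroup Y] [NormedSpace ℝ Y]

/-- The sequence `(T i)` is absolutely Cesàro bounded. -/
def AbsolutelyCesaroBounded (T : ℕ → X →L[ℝ] Y) : Prop :=
  ∃ C : ℝ, 0 < C ∧ ∀ x : X, ∀ n : ℕ, avg T x n ≤ C * ‖x‖

/-- Cesaro averages as seminorms. -/
noncomputable def avgSeminorm (T : ℕ → X →L[ℝ] Y) (n : ℕ) : Seminorm ℝ X :=
  Seminorm.of (avg T · n)
    (by
      intro x y
      simp only [avg, map_add]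
      rw [← add_div, ← Finset.sum_add_distrib]
      gcongr
      exact norm_add_le _ _)
    (by
      intro a x
      simp only [avg, map_smul, norm_smul]
      rw [← Finset.mul_sum, mul_div_assoc])

theorem mavg_eq (T : ℕ → X →L[ℝ] Y) (x y : X) (n : ℕ) : mavg T x y n = avg T (x - y) n := by
  simp [mavg, avg]

theorem avg_smul (T : ℕ → X →L[ℝ] Y) (a : ℝ) (x : X) (n : ℕ) :
    avg T (a • x) n = |a| * avg T x n :=
  map_smul_eq_mul (avgSeminorm T n) a x

theorem continuous_avg (T : ℕ → X →L[ℝ] Y) (n : ℕ) : Continuous (avgSeminorm T n) := by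
  change Continuous (fun x => avg T x n)
  unfold avg
  fun_prop

/-- **Mean version of the uniform boundedness theorem.** For a sequence of bounded
linear operators from a Banach space to a normed space, mean equicontinuity,
pointwise boundedness of the Cesàro averages, absolute Cesàro boundedness, and a
uniform-`sup` version of mean equicontinuity are all equivalent. -/
theorem meanEquicontinuous_tfae [CompleteSpace X] (T : ℕ → X →L[ℝ] Y) :
    List.TFAE [
      MeanEquicontinuous T,
      ∀ x : X, BddAbove (Set.range fun n => avg T x n),
      AbsolutelyCesaroBounded T,
      ∀ ε : ℝ, 0 < ε → ∃ δ : ℝ, 0 < δ ∧ ∀ x y : X, ‖x - y‖ < δ →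
        ∃ c : ℝ, c < ε ∧ ∀ n : ℕ, mavg T x y n ≤ c] := by
  tfae_have 1 → 2 := by
    intro h x
    obtain ⟨δ, hδ, H⟩ := h 1 one_pos
    obtain ⟨a, ha, hax⟩ : ∃ a : ℝ, 0 < a ∧ ‖a • x - 0‖ < δ := by
      refine ⟨δ / (‖x‖ + 1), by positivity, ?_⟩
      rw [sub_zero, norm_smul, Real.norm_of_nonneg (by positivity), div_mul_eq_mul_div,
        div_lt_iff₀ (by positivity)]
      nlinarith
    have h1 := Filter.eventually_lt_of_limsup_lt (H _ _ hax)
    have h2 : ∀ᶠ n in atTop, avg T x n ≤ a⁻¹ := by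
      filter_upwards [h1] with n hn
      have hn' : mavg T (a • x) 0 n < 1 := by exact_mod_cast hn
      rw [mavg_eq, sub_zero, avg_smul, abs_of_pos ha] at hn'
      rw [inv_eq_one_div, le_div_iff₀ ha]
      linarith
    exact (Filter.isBoundedUnder_of_eventually_le h2).bddAbove_range
  tfae_have 2 → 3 := by
    intro h
    have hb : BddAbove (Set.range (avgSeminorm T)) := by
      rw [Seminorm.bddAbove_range_iff]
      exact h
    have hc : Continuous (⨆ n, avgSeminorm T n : Seminorm ℝ X) := by
      have := Seminorm.continuous_iSup (avgSeminorm T) (continuous_avg T) hb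
      rwa [Seminorm.coe_iSup_eq hb]
    obtain ⟨C, hC, H⟩ := Seminorm.bound_of_continuous_normedSpace _ hc
    exact ⟨C, hC, fun x n => (le_ciSup hb n x).trans (H x)⟩
  tfae_have 3 → 4 := by
    rintro ⟨C, hC, H⟩ ε hε
    refine ⟨ε / C, by positivity, fun x y hxy => ⟨C * ‖x - y‖, ?_, fun n => ?_⟩⟩
    · rw [lt_div_iff₀ hC] at hxy
      linarith
    · rw [mavg_eq]
      exact H _ _
  tfae_have 4 → 1 := by
    intro h ε hε
    obtain ⟨δ, hδ, H⟩ := h ε hε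
    refine ⟨δ, hδ, fun x y hxy => ?_⟩
    obtain ⟨c, hc, hn⟩ := H x y hxy
    refine lt_of_le_of_lt (b := (c : EReal)) ?_ (by exact_mod_cast hc)
    exact Filter.limsup_le_of_le (by isBoundedDefault)
      (Filter.Eventually.of_forall fun n => by exact_mod_cast hn n)
  tfae_finish
end

section
/- Let (T_i)_{i=1}^∞ be a sequence of bounded linear operators from a Banach space X to a normed linear space Y. If the mean asymptotic cell MAsym(T_i,0) = {x∈X : lim_{n→∞} (1/n)∑_{i=1}^n ‖T_i x‖ = 0} is residual (comeagre) in X, then MAsym(T_i,0) = X, i.e., every x∈X satisfies lim_{n→∞} (1/n)∑_{i=1}^n ‖T_i x‖ = 0. -/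
open Filter Topology

variable {X Y : Type*} [NormedAddCommGroup X] [NormedSpace ℝ X]
  [NormedAddCommGroup Y] [NormedSpace ℝ Y]

/-- If the mean asymptotic cell of `0` is residual in a Banach space `X`, then it is
all of `X`. -/
theorem meanAsymptoticCell_eq_univ_of_residual [CompleteSpace X] (T : ℕ → X →L[ℝ] Y)
    (h : {x : X | Filter.Tendsto (avg T x) Filter.atTop (nhds 0)} ∈ residual X) :
    ∀ x : X, Filter.Tendsto (avg T x) Filter.atTop (nhds 0) := by
  intro x
  have h2 : (Homeomorph.subLeft x) ⁻¹' {x : X | Filter.Tendsto (avg T x) Filter.atTop (nhds 0)}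
      ∈ residual X :=
    tendsto_residual_of_isOpenMap (Homeomorph.subLeft x).continuous
      (Homeomorph.subLeft x).isOpenMap h
  obtain ⟨a, ha, hb⟩ := (dense_of_mem_residual (Filter.inter_mem h h2)).nonempty
  have ha' : Filter.Tendsto (avg T a) Filter.atTop (nhds 0) := ha
  have hb' : Filter.Tendsto (avg T (x - a)) Filter.atTop (nhds 0) := hb
  have hab := ha'.add hb'
  rw [add_zero] at hab
  refine squeeze_zero (fun n => ?_) (fun n => ?_) hab
  · unfold avg
    positivity
  · unfold avg
    rw [← add_div, ← Finset.sum_add_distrib]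
    refine div_le_div_of_nonneg_right (Finset.sum_le_sum fun i _ => ?_) (Nat.cast_nonneg n)
    calc ‖T i x‖ = ‖T i a + T i (x - a)‖ := by rw [← map_add, add_sub_cancel]
      _ ≤ _ := norm_add_le _ _
end

section
/- Let X = ℓ¹(ℕ) and let B : X → X be the backward shift, B(x_1,x_2,x_3,…) = (x_2,x_3,…). For a real sequence (λ_i)_{i=1}^∞, set T_i = λ_i B^i. The following are equivalent: (1) (T_i) is mean Li-Yorke chaotic; (2) (T_i) has a dense absolutely mean irregular manifold; (3) limsup_{n→∞} (1/n)∑_{i=1}^n |λ_i| = ∞. -/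
open Filter Topology

variable {X Y : Type*} [NormedAddCommGroup X] [NormedSpace ℝ X]
  [NormedAddCommGroup Y] [NormedSpace ℝ Y]

/-- The sequence `(T i)` is mean Li-Yorke chaotic: there is an uncountable set all of
whose pairs of distinct points are mean Li-Yorke pairs. -/
def MeanLiYorkeChaotic (T : ℕ → X →L[ℝ] Y) : Prop :=
  ∃ K : Set X, ¬ K.Countable ∧
    ∀ x ∈ K, ∀ y ∈ K, x ≠ y → (minf T x y = 0 ∧ 0 < msup T x y)

/-- The space `ℓ¹(ℕ)` of absolutely summable real sequences. -/
noncomputable abbrev ellOne : Type := lp (fun _ : ℕ => ℝ) 1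


section helpers

lemma limsup_top_iff_aux (u : ℕ → ℝ) :
    Filter.limsup (fun n => (u n : EReal)) Filter.atTop = ⊤ ↔
      ∀ M : ℝ, ∃ᶠ n in atTop, M ≤ u n := by
  constructor
  · intro h M
    have h1 : ((M : ℝ) : EReal) < Filter.limsup (fun n => (u n : EReal)) Filter.atTop := by
      rw [h]; exact EReal.coe_lt_top M
    have h2 := Filter.frequently_lt_of_lt_limsup (by isBoundedDefault) h1
    exact h2.mono fun n hn => (EReal.coe_lt_coe_iff.1 hn).le
  · intro h
    rw [EReal.eq_top_iff_forall_lt]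
    intro M
    have h1 : ((M + 1 : ℝ) : EReal) ≤ Filter.limsup (fun n => (u n : EReal)) Filter.atTop := by
      apply Filter.le_limsup_of_frequently_le
      · exact (h (M+1)).mono fun n hn => EReal.coe_le_coe_iff.2 hn
      · isBoundedDefault
    exact lt_of_lt_of_le (EReal.coe_lt_coe_iff.2 (by linarith)) h1

lemma liminf_zero_aux (u : ℕ → ℝ) (h0 : ∀ n, 0 ≤ u n)
    (h : ∀ ε : ℝ, 0 < ε → ∃ᶠ n in atTop, u n ≤ ε) :
    Filter.liminf (fun n => (u n : EReal)) Filter.atTop = 0 := by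
  apply le_antisymm
  · apply le_of_forall_gt
    intro c hc
    obtain ⟨r, hr0, hrc⟩ := EReal.lt_iff_exists_real_btwn.1 hc
    refine lt_of_le_of_lt ?_ hrc
    apply Filter.liminf_le_of_frequently_le
    · exact (h r (by exact_mod_cast hr0)).mono fun n hn => EReal.coe_le_coe_iff.2 hn
    · isBoundedDefault
  · apply Filter.le_liminf_of_le
    · isBoundedDefault
    · exact Filter.Eventually.of_forall fun n => by exact_mod_cast h0 n

lemma pow_apply_aux (B : ellOne →L[ℝ] ellOne)
    (hB : ∀ (x : ellOne) (j : ℕ), (B x : ∀ _ : ℕ, ℝ) j = (x : ∀ _ : ℕ, ℝ) (j + 1))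
    (i : ℕ) (x : ellOne) (j : ℕ) :
    ((B ^ i) x : ∀ _ : ℕ, ℝ) j = (x : ∀ _ : ℕ, ℝ) (j + i) := by
  induction i generalizing j with
  | zero => simp
  | succ i ih =>
    rw [pow_succ', ContinuousLinearMap.mul_apply, hB, ih]
    rw [show j + 1 + i = j + (i + 1) by omega]

lemma norm_ellOne (x : ellOne) : ‖x‖ = ∑' j, |(x : ∀ _ : ℕ, ℝ) j| := by
  have := lp.norm_eq_tsum_rpow (p := 1) (by norm_num) x
  simpa using this

lemma summable_ellOne (x : ellOne) : Summable fun j => |(x : ∀ _ : ℕ, ℝ) j| := by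
  have := (lp.memℓp x).summable (by norm_num)
  simpa using this

lemma memlp_one_of_summable (f : ℕ → ℝ) (hf : Summable fun j => |f j|) :
    Memℓp (E := fun _ : ℕ => ℝ) f 1 := by
  apply memℓp_gen
  simpa using hf

lemma norm_pow_aux (B : ellOne →L[ℝ] ellOne)
    (hB : ∀ (x : ellOne) (j : ℕ), (B x : ∀ _ : ℕ, ℝ) j = (x : ∀ _ : ℕ, ℝ) (j + 1))
    (i : ℕ) (x : ellOne) : ‖(B ^ i) x‖ = ∑' j, |(x : ∀ _ : ℕ, ℝ) (j + i)| := by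
  rw [norm_ellOne]
  simp_rw [pow_apply_aux B hB]

lemma norm_pow_le_aux (B : ellOne →L[ℝ] ellOne)
    (hB : ∀ (x : ellOne) (j : ℕ), (B x : ∀ _ : ℕ, ℝ) j = (x : ∀ _ : ℕ, ℝ) (j + 1))
    (i : ℕ) (x : ellOne) : ‖(B ^ i) x‖ ≤ ‖x‖ := by
  rw [norm_pow_aux B hB, norm_ellOne]
  exact _root_.tsum_comp_le_tsum_of_inj (summable_ellOne x) (fun _ => abs_nonneg _) (add_left_injective i)

lemma norm_pow_tendsto_aux (B : ellOne →L[ℝ] ellOne)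
    (hB : ∀ (x : ellOne) (j : ℕ), (B x : ∀ _ : ℕ, ℝ) j = (x : ∀ _ : ℕ, ℝ) (j + 1))
    (x : ellOne) : Tendsto (fun i => ‖(B ^ i) x‖) atTop (𝓝 0) := by
  simp_rw [norm_pow_aux B hB]
  exact tendsto_sum_nat_add fun j => |(x : ∀ _ : ℕ, ℝ) j|

/-- bounded weights: averages go to zero -/
lemma avg_tendsto_aux (l b : ℕ → ℝ) (hl : ∀ i, 0 ≤ l i) (hb0 : ∀ i, 0 ≤ b i)
    (hb : Tendsto b atTop (𝓝 0)) (C : ℝ)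
    (hC : ∀ᶠ n : ℕ in atTop, (∑ i ∈ Finset.Icc 1 n, l i) / n ≤ C) :
    ∀ ε : ℝ, 0 < ε → ∀ᶠ n : ℕ in atTop, (∑ i ∈ Finset.Icc 1 n, l i * b i) / n ≤ ε := by
  intro ε hε
  have hC' : 0 < |C| + 1 := by positivity
  have hδ : 0 < ε / 2 / (|C| + 1) := by positivity
  obtain ⟨R, hR⟩ := eventually_atTop.1 (hb.eventually_le_const hδ)
  have hD : Tendsto (fun n : ℕ => (∑ i ∈ Finset.range R, l i * b i) / n) atTop (𝓝 0) :=
    tendsto_const_div_atTop_nhds_zero_nat _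
  filter_upwards [hC, hD.eventually_le_const (half_pos hε), eventually_gt_atTop 0]
    with n h1 h2 hn
  have hn' : (0 : ℝ) < n := by exact_mod_cast hn
  have key : ∑ i ∈ Finset.Icc 1 n, l i * b i ≤ ∑ i ∈ Finset.range R, l i * b i +
      ∑ i ∈ Finset.Icc 1 n, l i * (ε / 2 / (|C| + 1)) := by
    have e1 : ∀ i ∈ Finset.Icc 1 n, l i * b i ≤
        (if i < R then l i * b i else 0) + l i * (ε / 2 / (|C| + 1)) := by
      intro i _
      split_ifs with h
      · have := mul_nonneg (hl i) hδ.le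
        linarith
      · have := mul_le_mul_of_nonneg_left (hR i (not_lt.1 h)) (hl i)
        linarith
    refine (Finset.sum_le_sum e1).trans ?_
    rw [Finset.sum_add_distrib]
    gcongr
    rw [← Finset.sum_filter]
    apply Finset.sum_le_sum_of_subset_of_nonneg
    · intro i hi
      simp at hi ⊢
      exact hi.2
    · intro i _ _
      exact mul_nonneg (hl i) (hb0 i)
  rw [← Finset.sum_mul] at key
  calc _ ≤ (∑ i ∈ Finset.range R, l i * b i + (∑ i ∈ Finset.Icc 1 n, l i) * (ε / 2 / (|C| + 1))) / n := by
        gcongr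
    _ = (∑ i ∈ Finset.range R, l i * b i) / n + ((∑ i ∈ Finset.Icc 1 n, l i) / n) * (ε / 2 / (|C| + 1)) := by ring
    _ ≤ ε / 2 + (|C| + 1) * (ε / 2 / (|C| + 1)) := by
        gcongr
        linarith [le_abs_self C]
    _ = ε := by field_simp; ring

lemma exists_seq_aux (l : ℕ → ℝ) (hl : ∀ i, 0 ≤ l i)
    (h : ∀ M : ℝ, ∃ᶠ n : ℕ in atTop, M ≤ (∑ i ∈ Finset.Icc 1 n, l i) / n) :
    ∃ (n N : ℕ → ℕ) (a K : ℕ → ℝ), StrictMono n ∧ (∀ m, 0 < a m) ∧ (∀ m, 0 ≤ K m) ∧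
      (∀ m, n m ≤ N m) ∧ (∀ m, 0 < N m) ∧
      (∀ m, (m + 1) * (∑ i ∈ Finset.Icc 1 (n m), l i) ≤ N m) ∧
      (∀ m, (∑ i ∈ Finset.Icc 1 (N m), l i) * K m ≤ 1 / ((m : ℝ) + 1)) ∧
      (∀ m m', m ≤ m' → a m' ≤ (1 / 2) ^ m' * K m) ∧
      (∀ m, a m ≤ (1 / 2) ^ m) ∧
      (∀ m : ℕ, (m : ℝ) ≤ (∑ i ∈ Finset.Icc 1 (n (m + 1)), l i) / (n (m + 1) : ℕ) * a m) := by
  set S : ℕ → ℝ := fun n => ∑ i ∈ Finset.Icc 1 n, l i with hS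
  have hS0 : ∀ n, 0 ≤ S n := fun n => Finset.sum_nonneg fun i _ => hl i
  have hSm : Monotone S := by
    intro p q hpq
    apply Finset.sum_le_sum_of_subset_of_nonneg
    · exact Finset.Icc_subset_Icc_right hpq
    · intro i _ _; exact hl i
  let N' : ℕ → ℕ → ℕ := fun m n => ⌈((m : ℝ) + 1) * S n⌉₊ + n + 1
  let K' : ℕ → ℕ → ℝ := fun m n => 1 / (((m : ℝ) + 1) * (1 + S (N' m n)))
  have hK' : ∀ m n, 0 < K' m n := by
    intro m n
    have := hS0 (N' m n)
    simp only [K']; positivity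
  have ex : ∀ m n : ℕ, ∃ p : ℕ, N' m n < p ∧ (m : ℝ) ≤ S p / p * ((1 / 2) ^ m * K' m n) := by
    intro m n
    have hp : 0 < (1 / 2 : ℝ) ^ m * K' m n := by have := hK' m n; positivity
    obtain ⟨p, hp1, hp2⟩ := ((h (m / ((1 / 2 : ℝ) ^ m * K' m n))).and_eventually
      (eventually_gt_atTop (N' m n))).exists
    refine ⟨p, hp2, ?_⟩
    rwa [div_le_iff₀ hp] at hp1
  choose g hg1 hg2 using ex
  let n : ℕ → ℕ := fun m => Nat.rec 0 (fun m r => g m r) m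
  have hn : ∀ m, n (m + 1) = g m (n m) := fun m => rfl
  have hNn : ∀ m, N' m (n m) < n (m + 1) := fun m => by rw [hn]; exact hg1 _ _
  have hnN : ∀ m, n m ≤ N' m (n m) := fun m => by simp only [N']; omega
  have hmono : StrictMono n := strictMono_nat_of_lt_succ fun m => (hnN m).trans_lt (hNn m)
  have hNmono : Monotone fun m => N' m (n m) := monotone_nat_of_le_succ fun m =>
    (hNn m).le.trans (hnN (m + 1))
  have hKanti : Antitone fun m => K' m (n m) := by
    intro m m' hm
    have := hS0 (N' m (n m))
    have h2 : S (N' m (n m)) ≤ S (N' m' (n m')) := hSm (hNmono hm)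
    have h3 : (m : ℝ) ≤ m' := by exact_mod_cast hm
    simp only [K']
    gcongr
  refine ⟨n, fun m => N' m (n m), fun m => (1 / 2) ^ m * K' m (n m), fun m => K' m (n m), hmono,
    ?_, fun m => (hK' _ _).le, hnN, ?_, ?_, ?_, ?_, ?_, ?_⟩
  · intro m; have := hK' m (n m); positivity
  · intro m; simp only [N']; omega
  · intro m
    simp only [N']; push_cast
    have := Nat.le_ceil (((m : ℝ) + 1) * S (n m))
    have h2 := Nat.cast_nonneg (α := ℝ) (n m)
    change ((m : ℝ) + 1) * S (n m) ≤ _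
    linarith
  · intro m
    have h1 := hS0 (N' m (n m))
    change S (N' m (n m)) * K' m (n m) ≤ _
    simp only [K'] at h1 ⊢
    rw [mul_one_div, div_le_div_iff₀ (by positivity) (by positivity)]
    nlinarith [(Nat.cast_nonneg m : (0 : ℝ) ≤ m)]
  · intro m m' hm
    exact mul_le_mul_of_nonneg_left (hKanti hm) (by positivity)
  · intro m
    have h1 := hS0 (N' m (n m))
    have : K' m (n m) ≤ 1 := by
      simp only [K'] at h1 ⊢
      rw [div_le_one (by positivity)]
      nlinarith [(Nat.cast_nonneg m : (0 : ℝ) ≤ m)]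
    exact mul_le_of_le_one_right (by positivity) this
  · intro m
    exact hg2 m (n m)

lemma irregular_aux (B : ellOne →L[ℝ] ellOne)
    (hB : ∀ (x : ellOne) (j : ℕ), (B x : ∀ _ : ℕ, ℝ) j = (x : ∀ _ : ℕ, ℝ) (j + 1))
    (lam : ℕ → ℝ) (T : ℕ → ellOne →L[ℝ] ellOne) (hT : ∀ i, T i = lam i • B ^ i)
    (h : ∀ M : ℝ, ∃ᶠ n : ℕ in atTop, M ≤ (∑ i ∈ Finset.Icc 1 n, |lam i|) / n) :
    ∃ (p : ℕ → ℕ) (a : ℕ → ℝ), Function.Injective p ∧ (∀ m, m ≤ p m) ∧ (∀ m, 0 < a m) ∧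
      Summable a ∧ ∀ z : ellOne, ∀ C R : ℕ,
        (∀ x, R ≤ x → |(z : ∀ _ : ℕ, ℝ) x| ≤ C * Function.extend p a 0 x) →
        ∀ δ : ℝ, 0 < δ → (∃ᶠ m in atTop, δ * a m ≤ |(z : ∀ _ : ℕ, ℝ) (p m)|) →
        ainf T z = 0 ∧ asup T z = ⊤ := by
  obtain ⟨n, N, a, K, hmono, ha, hK, hnN, hN0, hN, hSK, haK, ha2, hbig⟩ :=
    exists_seq_aux (fun i => |lam i|) (fun i => abs_nonneg _) h
  have hpm : StrictMono fun m => n (m + 1) := fun x y hxy => hmono (by omega)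
  have hnormT : ∀ i (z : ellOne), ‖T i z‖ = |lam i| * ‖(B ^ i) z‖ := by
    intro i z
    rw [hT, ContinuousLinearMap.smul_apply, norm_smul, Real.norm_eq_abs]
  refine ⟨fun m => n (m + 1), a, hpm.injective, fun m => hpm.id_le m, ha,
    Summable.of_nonneg_of_le (fun m => (ha m).le) ha2 summable_geometric_two, ?_⟩
  intro z C R hz δ hδ hfr
  constructor
  · apply liminf_zero_aux
    · intro k; unfold avg; positivity
    intro ε hε
    -- tail bound
    have tail : ∀ m i : ℕ, R ≤ n m → n m < i → ‖(B ^ i) z‖ ≤ 2 * C * K m := by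
      intro m i hR hi
      rw [norm_pow_aux B hB]
      let V : ℕ → ℝ := Function.extend (fun m => n (m + 1)) (fun q => C * ((1 / 2) ^ q * K m)) 0
      have hV0 : ∀ x, 0 ≤ V x := by
        intro x
        by_cases hx : ∃ q, n (q + 1) = x
        · obtain ⟨q, rfl⟩ := hx
          have : V (n (q+1)) = _ := hpm.injective.extend_apply _ _ q
          rw [this]
          have := hK m
          positivity
        · have : V x = _ := Function.extend_apply' _ _ _ hx
          rw [this]; simp
      have hc : HasSum (fun q : ℕ => (C : ℝ) * ((1 / 2) ^ q * K m)) (C * (2 * K m)) :=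
        (hasSum_geometric_two.mul_right _).mul_left _
      have hVs : HasSum V (C * (2 * K m)) := (hasSum_extend_zero hpm.injective).2 hc
      have hzV : ∀ j, |(z : ∀ _ : ℕ, ℝ) (j + i)| ≤ V (j + i) := by
        intro j
        refine (hz (j + i) (by omega)).trans ?_
        by_cases hx : ∃ q, n (q + 1) = j + i
        · obtain ⟨q, hq⟩ := hx
          rw [← hq]
          have e1 : V (n (q+1)) = _ := hpm.injective.extend_apply _ _ q
          have e2 : Function.extend (fun m => n (m + 1)) a 0 (n (q+1)) = _ :=
            hpm.injective.extend_apply _ _ q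
          rw [e1, e2]
          have : m ≤ q := by
            by_contra hcon
            have : n (q + 1) ≤ n m := hmono.monotone (by omega)
            omega
          have := haK m q this
          gcongr
        · rw [Function.extend_apply' _ _ _ hx]
          simpa using hV0 _
      have hVsh : Summable fun j => V (j + i) := hVs.summable.comp_injective (add_left_injective i)
      calc _ ≤ ∑' j, V (j + i) :=
            Summable.tsum_le_tsum hzV (Summable.of_nonneg_of_le (fun _ => abs_nonneg _) hzV hVsh) hVsh
        _ ≤ ∑' j, V j := _root_.tsum_comp_le_tsum_of_inj hVs.summable hV0 (add_left_injective i)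
        _ = 2 * C * K m := by rw [hVs.tsum_eq]; ring
    have bd : ∀ m, R ≤ n m → avg T z (N m) ≤ (‖z‖ + 2 * C) / (m + 1) := by
      intro m hR
      unfold avg
      have hNm : (1 : ℝ) ≤ N m := by exact_mod_cast hN0 m
      rw [div_le_iff₀ (by linarith)]
      have e1 : ∀ i ∈ Finset.Icc 1 (N m), ‖T i z‖ ≤
          (if i ≤ n m then |lam i| * ‖z‖ else 0) + |lam i| * (2 * C * K m) := by
        intro i _
        rw [hnormT]
        have := hK m
        split_ifs with hi
        · have := mul_le_mul_of_nonneg_left (norm_pow_le_aux B hB i z) (abs_nonneg (lam i))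
          have : 0 ≤ |lam i| * (2 * C * K m) := by positivity
          linarith
        · have := mul_le_mul_of_nonneg_left (tail m i hR (by omega)) (abs_nonneg (lam i))
          linarith
      refine (Finset.sum_le_sum e1).trans ?_
      rw [Finset.sum_add_distrib, ← Finset.sum_filter, ← Finset.sum_mul, ← Finset.sum_mul]
      have e2 : Finset.filter (fun i => i ≤ n m) (Finset.Icc 1 (N m)) = Finset.Icc 1 (n m) := by
        ext i
        have := hnN m
        simp only [Finset.mem_filter, Finset.mem_Icc]
        omega
      rw [e2]
      have h1 := hN m
      have h2 := hSK m
      have hm : (0 : ℝ) < (m : ℝ) + 1 := by positivity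
      rw [div_mul_eq_mul_div, le_div_iff₀ hm]
      rw [le_div_iff₀ hm] at h2
      have h3 := mul_le_mul_of_nonneg_left h1 (norm_nonneg z)
      have hC0 : (0 : ℝ) ≤ 2 * C := by positivity
      have h4 := mul_le_mul_of_nonneg_left (h2.trans hNm) hC0
      nlinarith
    have ht : Tendsto (fun m : ℕ => (‖z‖ + 2 * C) / ((m : ℝ) + 1)) atTop (𝓝 0) := by
      have := (tendsto_const_div_atTop_nhds_zero_nat (‖z‖ + 2 * C)).comp (tendsto_add_atTop_nat 1)
      refine this.congr fun m => ?_
      simp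
    have hNt : Tendsto N atTop atTop :=
      tendsto_atTop_mono (fun m => (hmono.id_le m).trans (hnN m)) tendsto_id
    apply hNt.frequently
    apply Eventually.frequently
    filter_upwards [ht.eventually_le_const hε, hmono.tendsto_atTop.eventually_ge_atTop R] with m h1 h2
    exact (bd m h2).trans h1
  · unfold asup
    rw [limsup_top_iff_aux]
    intro M
    apply hpm.tendsto_atTop.frequently
    obtain ⟨q, hq⟩ := exists_nat_ge (M / δ)
    refine (hfr.and_eventually (eventually_ge_atTop q)).mono ?_
    rintro m ⟨h1, h2⟩
    have h3 := hbig m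
    have h4 : M ≤ δ * m := by
      rw [div_le_iff₀ hδ] at hq
      have : (q : ℝ) ≤ m := by exact_mod_cast h2
      nlinarith
    have h5 : (∑ i ∈ Finset.Icc 1 (n (m + 1)), |lam i|) * (δ * a m) ≤
        ∑ i ∈ Finset.Icc 1 (n (m + 1)), ‖T i z‖ := by
      rw [Finset.sum_mul]
      apply Finset.sum_le_sum
      intro i hi
      rw [hnormT]
      apply mul_le_mul_of_nonneg_left _ (abs_nonneg _)
      refine h1.trans ?_
      have h6 := lp.norm_apply_le_norm one_ne_zero ((B ^ i) z) (n (m + 1) - i)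
      rw [pow_apply_aux B hB, Nat.sub_add_cancel (Finset.mem_Icc.1 hi).2] at h6
      exact h6
    unfold avg
    calc M ≤ δ * m := h4
      _ ≤ δ * ((∑ i ∈ Finset.Icc 1 (n (m + 1)), |lam i|) / (n (m + 1) : ℕ) * a m) := by gcongr
      _ = ((∑ i ∈ Finset.Icc 1 (n (m + 1)), |lam i|) * (δ * a m)) / (n (m + 1) : ℕ) := by ring
      _ ≤ _ := by gcongr

lemma closure_aux (Z : Submodule ℝ ellOne)
    (h : ∀ j : ℕ, lp.single (E := fun _ : ℕ => ℝ) 1 j (1 : ℝ) ∈ Z.topologicalClosure) :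
    Dense (Z : Set ellOne) := by
  rw [Submodule.dense_iff_topologicalClosure_eq_top, eq_top_iff]
  intro x _
  have hs := lp.hasSum_single (E := fun _ : ℕ => ℝ) (p := 1) (by norm_num) x
  refine Z.isClosed_topologicalClosure.mem_of_tendsto hs (Eventually.of_forall fun s => ?_)
  apply Submodule.sum_mem
  intro j _
  have : lp.single (E := fun _ : ℕ => ℝ) 1 j ((x : ∀ _ : ℕ, ℝ) j) =
      ((x : ∀ _ : ℕ, ℝ) j) • lp.single (E := fun _ : ℕ => ℝ) 1 j (1 : ℝ) := by
    rw [← lp.single_smul]; simp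
  rw [this]
  exact Submodule.smul_mem _ _ (h j)

lemma manifold_aux (B : ellOne →L[ℝ] ellOne)
    (hB : ∀ (x : ellOne) (j : ℕ), (B x : ∀ _ : ℕ, ℝ) j = (x : ∀ _ : ℕ, ℝ) (j + 1))
    (lam : ℕ → ℝ) (T : ℕ → ellOne →L[ℝ] ellOne) (hT : ∀ i, T i = lam i • B ^ i)
    (h : ∀ M : ℝ, ∃ᶠ n : ℕ in atTop, M ≤ (∑ i ∈ Finset.Icc 1 n, |lam i|) / n) :
    ∃ Z : Submodule ℝ ellOne, Dense (Z : Set ellOne) ∧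
        ∀ z ∈ Z, z ≠ 0 → (ainf T z = 0 ∧ asup T z = ⊤) := by
  obtain ⟨p, a, hp, hmp, ha, has, hirr⟩ := irregular_aux B hB lam T hT h
  let w : ℕ → ℕ → ℝ := fun k => Function.extend p (fun m => if (Nat.unpair m).1 = k then a m else 0) 0
  let U : ℕ → ℝ := Function.extend p a 0
  have hUp : ∀ m, U (p m) = a m := fun m => hp.extend_apply _ _ m
  have hwp : ∀ k m, w k (p m) = if (Nat.unpair m).1 = k then a m else 0 :=
    fun k m => hp.extend_apply _ _ m
  have hUs : Summable U := (summable_extend_zero hp).2 has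
  have hU0 : ∀ x, 0 ≤ U x := by
    intro x
    by_cases hx : ∃ q, p q = x
    · obtain ⟨q, rfl⟩ := hx
      rw [hUp]; exact (ha q).le
    · have : U x = _ := Function.extend_apply' _ _ _ hx
      rw [this]; simp
  have hwU : ∀ k x, |w k x| ≤ U x := by
    intro k x
    by_cases hx : ∃ q, p q = x
    · obtain ⟨q, rfl⟩ := hx
      rw [hwp, hUp]
      have := (ha q).le
      split_ifs
      · rw [abs_of_nonneg this]
      · simpa using this
    · have : w k x = _ := Function.extend_apply' _ _ _ hx
      rw [this]; simpa using hU0 x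
  have hws : ∀ k, Summable fun x => |w k x| := fun k =>
    Summable.of_nonneg_of_le (fun _ => abs_nonneg _) (hwU k) hUs
  let u : ℕ → ellOne := fun k => ⟨w k, memlp_one_of_summable _ (hws k)⟩
  have hu : ∀ k x, (u k : ∀ _ : ℕ, ℝ) x = w k x := fun _ _ => rfl
  have hun : ∀ k, ‖u k‖ ≤ ∑' x, U x := fun k => by
    rw [norm_ellOne]
    exact (hws k).tsum_le_tsum (hwU k) hUs
  let e : ℕ → ellOne := fun j => lp.single (E := fun _ : ℕ => ℝ) 1 j (1 : ℝ)
  let r : ℕ → ℝ := fun k => 1 / (((Nat.unpair k).2 : ℝ) + 1)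
  have hr0 : ∀ k, 0 < r k := fun k => by simp only [r]; positivity
  have hr1 : ∀ k, r k ≤ 1 := fun k => by
    simp only [r]; rw [div_le_one (by positivity)]
    linarith [(Nat.cast_nonneg (Nat.unpair k).2 : (0 : ℝ) ≤ _)]
  let v : ℕ → ellOne := fun k => e (Nat.unpair k).1 + r k • u k
  have hv : ∀ k x, k < x → (v k : ∀ _ : ℕ, ℝ) x = r k * w k x := by
    intro k x hx
    have h1 : x ≠ (Nat.unpair k).1 := by have := Nat.unpair_left_le k; omega
    have h2 : (e (Nat.unpair k).1 : ∀ _ : ℕ, ℝ) x = 0 := by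
      simp only [e]
      rw [lp.single_apply_ne _ _ _ h1]
    change (e (Nat.unpair k).1 : ∀ _ : ℕ, ℝ) x + r k * (u k : ∀ _ : ℕ, ℝ) x = _
    rw [h2, hu, zero_add]
  refine ⟨Submodule.span ℝ (Set.range v), ?_, ?_⟩
  · apply closure_aux
    intro j
    have ht : Tendsto (fun q => v (Nat.pair j q)) atTop (𝓝 (e j)) := by
      rw [tendsto_iff_norm_sub_tendsto_zero]
      have hb : Tendsto (fun q : ℕ => 1 / ((q : ℝ) + 1) * ∑' x, U x) atTop (𝓝 0) := by
        simpa using (tendsto_one_div_add_atTop_nhds_zero_nat (𝕜 := ℝ)).mul_const (∑' x, U x)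
      refine squeeze_zero (fun _ => norm_nonneg _) (fun q => ?_) hb
      have : v (Nat.pair j q) - e j = r (Nat.pair j q) • u (Nat.pair j q) := by
        simp only [v, Nat.unpair_pair]; abel
      rw [this, norm_smul, Real.norm_eq_abs, abs_of_pos (hr0 _)]
      simp only [r, Nat.unpair_pair]
      have := hun (Nat.pair j q)
      gcongr
    apply (Submodule.isClosed_topologicalClosure _).mem_of_tendsto ht
    exact Eventually.of_forall fun q =>
      Submodule.le_topologicalClosure _ (Submodule.subset_span ⟨_, rfl⟩)
  · intro z hz hz0
    obtain ⟨c, rfl⟩ := (Finsupp.mem_span_range_iff_exists_finsupp).1 hz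
    have hc0 : c ≠ 0 := by rintro rfl; simp at hz0
    obtain ⟨k, hk⟩ := Finsupp.ne_iff.1 hc0
    simp only [Finsupp.coe_zero, Pi.zero_apply] at hk
    set z : ellOne := c.sum fun i a => a • v i with hzdef
    obtain ⟨R, hR⟩ : ∃ R, ∀ i ∈ c.support, i < R :=
      ⟨c.support.sup id + 1, fun i hi => Nat.lt_succ_of_le (Finset.le_sup (f := id) hi)⟩
    have hzx : ∀ x, R ≤ x → (z : ∀ _ : ℕ, ℝ) x = ∑ i ∈ c.support, c i * (r i * w i x) := by
      intro x hx
      rw [hzdef, Finsupp.sum, lp.coeFn_sum, Finset.sum_apply]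
      apply Finset.sum_congr rfl
      intro i hi
      rw [lp.coeFn_smul, Pi.smul_apply, smul_eq_mul, hv i x (lt_of_lt_of_le (hR i hi) hx)]
    obtain ⟨C, hC⟩ := exists_nat_ge (∑ i ∈ c.support, |c i|)
    refine hirr z C R ?_ (|c k| * r k) (mul_pos (abs_pos.2 hk) (hr0 k)) ?_
    · intro x hx
      rw [hzx x hx]
      refine (Finset.abs_sum_le_sum_abs _ _).trans ?_
      refine le_trans ?_ (mul_le_mul_of_nonneg_right hC (hU0 x))
      rw [Finset.sum_mul]
      apply Finset.sum_le_sum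
      intro i _
      rw [abs_mul, abs_mul, abs_of_pos (hr0 i)]
      apply mul_le_mul_of_nonneg_left _ (abs_nonneg _)
      exact (mul_le_of_le_one_left (abs_nonneg _) (hr1 i)).trans (hwU i x)
    · have hpt : Tendsto (fun q => Nat.pair k q) atTop atTop :=
        tendsto_atTop_mono (fun q => Nat.right_le_pair k q) tendsto_id
      apply hpt.frequently
      apply Eventually.frequently
      filter_upwards [eventually_ge_atTop R] with q hq
      have hRx : R ≤ p (Nat.pair k q) := hq.trans ((Nat.right_le_pair k q).trans (hmp _))
      rw [hzx _ hRx, Finset.sum_eq_single k]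
      · rw [hwp, Nat.unpair_pair, if_pos rfl, abs_mul, abs_mul, abs_of_pos (hr0 k),
          abs_of_pos (ha _), mul_assoc]
      · intro i _ hik
        rw [hwp, Nat.unpair_pair, if_neg (Ne.symm hik)]; simp
      · intro hk'
        exact absurd (Finsupp.mem_support_iff.2 hk) hk'

lemma ly_of_manifold (T : ℕ → ellOne →L[ℝ] ellOne) (Z : Submodule ℝ ellOne)
    (hd : Dense (Z : Set ellOne))
    (hZ : ∀ z ∈ Z, z ≠ 0 → (ainf T z = 0 ∧ asup T z = ⊤)) : MeanLiYorkeChaotic T := by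
  obtain ⟨z, hz, hz0⟩ : ∃ z ∈ Z, z ≠ 0 := by
    rw [← Submodule.ne_bot_iff]
    rintro rfl
    rw [Submodule.dense_iff_topologicalClosure_eq_top] at hd
    have h1 : (lp.single (E := fun _ : ℕ => ℝ) 1 0 (1 : ℝ)) ∈
        (⊥ : Submodule ℝ ellOne).topologicalClosure := by rw [hd]; trivial
    rw [IsClosed.submodule_topologicalClosure_eq (by simp), Submodule.mem_bot] at h1
    have h2 := congrArg (fun x : ellOne => (x : ∀ _ : ℕ, ℝ) 0) h1
    simp at h2
  refine ⟨Set.range fun t : ℝ => t • z, ?_, ?_⟩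
  · intro hc
    have hinj : Function.Injective fun t : ℝ => t • z := smul_left_injective ℝ hz0
    rw [← Set.image_univ] at hc
    exact Cardinal.not_countable_real (Set.countable_of_injective_of_countable_image hinj.injOn hc)
  · rintro _ ⟨s, rfl⟩ _ ⟨t, rfl⟩ hst
    have hm : (fun s t => mavg T (s • z) (t • z)) s t = avg T ((s - t) • z) := by
      funext n
      simp only [mavg, avg, ← map_sub, sub_smul]
    have := hZ ((s - t) • z) (Z.smul_mem _ hz)
      (smul_ne_zero (fun hh => hst (by rw [sub_eq_zero.1 hh])) hz0)
    unfold minf msup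
    simp only at hm
    rw [hm]
    refine ⟨this.1, ?_⟩
    have h2 := this.2
    unfold asup at h2
    rw [h2]; exact EReal.zero_lt_top

end helpers

/-- For the sequence of operators `T i = λ i • B ^ i` on `ℓ¹(ℕ)`, where `B` is the
backward shift, mean Li-Yorke chaos is equivalent to the existence of a dense
absolutely mean irregular manifold, and to `limsup (1/n) ∑_{i=1}^n |λ i| = ∞`. -/
theorem backwardShift_meanLiYorkeChaotic_tfae
    (B : ellOne →L[ℝ] ellOne)
    (hB : ∀ (x : ellOne) (j : ℕ), (B x : ∀ _ : ℕ, ℝ) j = (x : ∀ _ : ℕ, ℝ) (j + 1))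
    (lam : ℕ → ℝ) (T : ℕ → ellOne →L[ℝ] ellOne) (hT : ∀ i, T i = lam i • B ^ i) :
    List.TFAE [
      MeanLiYorkeChaotic T,
      ∃ Z : Submodule ℝ ellOne, Dense (Z : Set ellOne) ∧
        ∀ z ∈ Z, z ≠ 0 → (ainf T z = 0 ∧ asup T z = ⊤),
      Filter.limsup
        (fun n => (((∑ i ∈ Finset.Icc 1 n, |lam i|) / n : ℝ) : EReal)) Filter.atTop = ⊤] := by
  tfae_have 2 → 1 := by
    rintro ⟨Z, hd, hZ⟩
    exact ly_of_manifold T Z hd hZ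
  tfae_have 3 → 2 := by
    intro h
    exact manifold_aux B hB lam T hT ((limsup_top_iff_aux _).1 h)
  tfae_have 1 → 3 := by
    rintro ⟨K, hK, hKp⟩
    rw [limsup_top_iff_aux]
    by_contra hcon
    push Not at hcon
    obtain ⟨C, hC⟩ := hcon
    obtain ⟨x, hx, y, hy, hxy⟩ : ∃ x ∈ K, ∃ y ∈ K, x ≠ y := by
      by_contra hc
      push Not at hc
      exact hK (Set.Subsingleton.countable fun x hx y hy => hc x hx y hy)
    have hpos := (hKp x hx y hy hxy).2
    obtain ⟨r, hr0, hr⟩ := EReal.lt_iff_exists_real_btwn.1 hpos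
    have hr0' : (0 : ℝ) < r := by exact_mod_cast hr0
    have hav := avg_tendsto_aux (fun i => |lam i|) (fun i => ‖(B ^ i) (x - y)‖)
      (fun _ => abs_nonneg _) (fun _ => norm_nonneg _) (norm_pow_tendsto_aux B hB (x - y)) C
      (hC.mono fun n hn => hn.le) r hr0'
    refine absurd hr (not_lt.2 ?_)
    apply Filter.limsup_le_of_le
    · isBoundedDefault
    filter_upwards [hav] with n hn
    rw [EReal.coe_le_coe_iff]
    refine le_trans (le_of_eq ?_) hn
    unfold mavg
    congr 1
    apply Finset.sum_congr rfl
    intro i _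
    rw [← map_sub, hT, ContinuousLinearMap.smul_apply, norm_smul, Real.norm_eq_abs]
  tfae_finish
end

section
/- Let (T_i)_{i=1}^∞ be a submultiplicative sequence of bounded linear operators on a Banach space X. If (T_i) is mean equicontinuous, then every proximal pair is mean asymptotic; that is, if (x,y)∈X×X satisfies inf_{k∈ℕ} ‖T_k x − T_k y‖ = 0 (there exists k with ‖T_k x − T_k y‖ arbitrarily small), then lim_{n→∞} (1/n)∑_{i=1}^n ‖T_i x − T_i y‖ = 0. -/
open Filter Topology

variable {X Y : Type*} [NormedAddCommGroup X] [NormedSpace ℝ X]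
  [NormedAddCommGroup Y] [NormedSpace ℝ Y]

/-- The sequence `(T i)` is submultiplicative: `‖T (i+m) z‖ ≤ C ‖T i (T m z)‖`
for all `z` and all indices `i, m ≥ 1`. -/
def Submultiplicative (T : ℕ → X →L[ℝ] X) : Prop :=
  ∃ C : ℝ, 0 < C ∧ ∀ z : X, ∀ i m : ℕ, 1 ≤ i → 1 ≤ m →
    ‖T (i + m) z‖ ≤ C * ‖T i (T m z)‖

/-- For a submultiplicative, mean equicontinuous sequence of bounded linear operators
on a Banach space, every proximal pair is mean asymptotic. -/
theorem meanAsymptotic_of_proximal [CompleteSpace X] (T : ℕ → X →L[ℝ] X)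
    (hsub : Submultiplicative T) (heq : MeanEquicontinuous T) (x y : X)
    (hprox : ∀ δ : ℝ, 0 < δ → ∃ k : ℕ, 1 ≤ k ∧ ‖T k x - T k y‖ < δ) :
    Filter.Tendsto (mavg T x y) Filter.atTop (nhds 0) := by
  obtain ⟨C, hC, hsub⟩ := hsub
  have hnn : ∀ n, 0 ≤ mavg T x y n := fun n => by unfold mavg; positivity
  refine tendsto_order.2 ⟨fun a ha => Eventually.of_forall fun n => ha.trans_le (hnn n), ?_⟩
  intro ε hε
  obtain ⟨δ, hδ, h⟩ := heq (ε / (2 * C)) (by positivity)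
  obtain ⟨k, hk, hkδ⟩ := hprox δ hδ
  have h1 := Filter.eventually_lt_of_limsup_lt (h _ _ hkδ)
  set A := ∑ i ∈ Finset.Icc 1 k, ‖T i x - T i y‖ with hA
  have h2 : ∀ᶠ n : ℕ in atTop, A / n < ε / 2 :=
    (tendsto_const_div_atTop_nhds_zero_nat A).eventually_lt_const (by positivity)
  filter_upwards [h1, h2, eventually_gt_atTop 0] with n h1 h2 hn
  have h1 : mavg T (T k x) (T k y) n < ε / (2 * C) := by exact_mod_cast h1
  have key : ∀ n : ℕ, ∑ i ∈ Finset.Icc 1 (n + k), ‖T i x - T i y‖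
      ≤ A + C * ∑ i ∈ Finset.Icc 1 n, ‖T i (T k x) - T i (T k y)‖ := by
    intro n
    induction n with
    | zero => simp [hA]
    | succ n ih =>
      have e : n + 1 + k = (n + k) + 1 := by omega
      rw [e, Finset.sum_Icc_succ_top (by omega), Finset.sum_Icc_succ_top (by omega), ← e]
      have := hsub (x - y) (n + 1) k (by omega) hk
      simp only [map_sub] at this
      linarith
  have h3 : ∑ i ∈ Finset.Icc 1 n, ‖T i x - T i y‖
      ≤ ∑ i ∈ Finset.Icc 1 (n + k), ‖T i x - T i y‖ :=
    Finset.sum_le_sum_of_subset_of_nonneg (Finset.Icc_subset_Icc_right (by omega))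
      fun _ _ _ => norm_nonneg _
  have hn' : (0 : ℝ) < n := by exact_mod_cast hn
  have h4 : mavg T x y n ≤ A / n + C * mavg T (T k x) (T k y) n := by
    unfold mavg
    rw [← mul_div_assoc, ← add_div]
    exact div_le_div_of_nonneg_right (h3.trans (key n)) hn'.le
  have h5 : C * mavg T (T k x) (T k y) n < C * (ε / (2 * C)) := mul_lt_mul_of_pos_left h1 hC
  have h6 : C * (ε / (2 * C)) = ε / 2 := by field_simp
  linarith
end

section
/- Let (T_i)_{i=1}^∞ be a submultiplicative sequence of bounded linear operators on a Banach space X. If there exists an absolutely mean semi-irregular vector, then (T_i) is mean sensitive. -/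
open Filter Topology

variable {X Y : Type*} [NormedAddCommGroup X] [NormedSpace ℝ X]
  [NormedAddCommGroup Y] [NormedSpace ℝ Y]

/-- A submultiplicative sequence of operators on a Banach space admitting an
absolutely mean semi-irregular vector is mean sensitive. -/
theorem meanSensitive_of_semiIrregular [CompleteSpace X] (T : ℕ → X →L[ℝ] X)
    (hsub : Submultiplicative T)
    (h : ∃ x : X, ainf T x = 0 ∧ 0 < asup T x) :
    MeanSensitive T := by
  obtain ⟨C, hC, hT⟩ := hsub
  obtain ⟨x, h0, hpos⟩ := h
  obtain ⟨a, ha0, ha⟩ := EReal.lt_iff_exists_real_btwn.1 hpos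
  have ha0' : 0 < a := by exact_mod_cast ha0
  have hfa : ∃ᶠ n in atTop, (a : EReal) < (avg T x n : EReal) :=
    frequently_lt_of_lt_limsup (by isBoundedDefault) ha
  refine ⟨a / (4 * C), by positivity, fun x0 ε hε => ?_⟩
  have hm : ∃ m, 1 ≤ m ∧ ‖T m x‖ < ε := by
    have hlt : ainf T x < (ε : EReal) := by
      rw [h0]; exact_mod_cast hε
    have hf : ∃ᶠ n in atTop, (avg T x n : EReal) < (ε : EReal) :=
      frequently_lt_of_liminf_lt (by isBoundedDefault) hlt
    obtain ⟨n, hn, hn1⟩ := (hf.and_eventually (eventually_ge_atTop 1)).exists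
    have hn' : avg T x n < ε := by exact_mod_cast hn
    by_contra! hcon
    have hnpos : (0 : ℝ) < n := by exact_mod_cast hn1
    have hs : (n : ℝ) * ε ≤ ∑ i ∈ Finset.Icc 1 n, ‖T i x‖ := by
      have := Finset.card_nsmul_le_sum (Finset.Icc 1 n) (fun i => ‖T i x‖) ε
        (fun i hi => hcon i (Finset.mem_Icc.1 hi).1)
      simpa using this
    unfold avg at hn'
    rw [div_lt_iff₀ hnpos] at hn'
    linarith
  obtain ⟨m, hm1, hmε⟩ := hm
  refine ⟨x0 - T m x, by simpa using hmε, ?_⟩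
  set K : ℝ := ∑ i ∈ Finset.Icc 1 m, ‖T i x‖ with hK
  have hev : ∀ᶠ n : ℕ in atTop, 2 * K / a ≤ (n : ℝ) :=
    tendsto_natCast_atTop_atTop.eventually_ge_atTop _
  have hfr : ∃ᶠ n in atTop, ((a / (2 * C) : ℝ) : EReal) ≤
      (mavg T x0 (x0 - T m x) n : EReal) := by
    refine (hfa.and_eventually (hev.and (eventually_ge_atTop 1))).mono ?_
    rintro n ⟨hn, hnK, hn1⟩
    have hn' : a < avg T x n := by exact_mod_cast hn
    have hnpos : (0 : ℝ) < n := by exact_mod_cast hn1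
    unfold avg at hn'
    rw [lt_div_iff₀ hnpos] at hn'
    rw [div_le_iff₀ ha0'] at hnK
    have hsum : ∑ i ∈ Finset.Icc 1 n, ‖T i x‖ ≤
        K + C * ∑ i ∈ Finset.Icc 1 n, ‖T i (T m x)‖ := by
      calc ∑ i ∈ Finset.Icc 1 n, ‖T i x‖
          ≤ ∑ i ∈ Finset.Icc 1 m ∪ (Finset.Icc 1 n).image (· + m), ‖T i x‖ := by
            refine Finset.sum_le_sum_of_subset_of_nonneg ?_ (fun _ _ _ => norm_nonneg _)
            intro i hi
            simp only [Finset.mem_union, Finset.mem_Icc, Finset.mem_image] at hi ⊢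
            by_cases him : i ≤ m
            · exact Or.inl ⟨hi.1, him⟩
            · exact Or.inr ⟨i - m, by omega, by omega⟩
        _ ≤ K + ∑ i ∈ (Finset.Icc 1 n).image (· + m), ‖T i x‖ := by
            rw [hK, ← Finset.sum_union_inter]
            exact le_add_of_nonneg_right (Finset.sum_nonneg fun _ _ => norm_nonneg _)
        _ = K + ∑ i ∈ Finset.Icc 1 n, ‖T (i + m) x‖ := by
            rw [Finset.sum_image (fun _ _ _ _ h => Nat.add_right_cancel h)]
        _ ≤ K + C * ∑ i ∈ Finset.Icc 1 n, ‖T i (T m x)‖ := by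
            rw [Finset.mul_sum]
            gcongr with i hi
            exact hT x i m (Finset.mem_Icc.1 hi).1 hm1
    have key : a / (2 * C) ≤ mavg T x0 (x0 - T m x) n := by
      unfold mavg
      simp only [map_sub, sub_sub_cancel]
      rw [le_div_iff₀ hnpos, div_mul_eq_mul_div, div_le_iff₀ (by positivity)]
      linarith
    exact_mod_cast key
  refine lt_of_lt_of_le ?_ (le_limsup_of_frequently_le hfr (by isBoundedDefault))
  rw [EReal.coe_lt_coe_iff, div_lt_div_iff₀ (by positivity) (by positivity)]
  nlinarith [mul_pos ha0' hC]
end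

section
/- Let (T_i)_{i=1}^∞ be a submultiplicative sequence of bounded linear operators on a separable Banach space X. The following are equivalent: (1) (T_i) is densely mean Li-Yorke chaotic; (2) the set of mean Li-Yorke pairs is dense in X×X; (3) the set of absolutely mean semi-irregular vectors is dense in X; (4) the set of absolutely mean irregular vectors is residual in X; (5) the mean proximal relation MProx(T_i) is dense in X×X and (T_i) is mean sensitive; (6) the mean proximal cell MProx(T_i,0) is dense in X and there exists a vector x∈X with limsup_{n→∞} (1/n)∑_{i=1}^n ‖T_i x‖ > 0. -/
open Filter Topology

variable {X Y : Type*} [NormedAddCommGroup X] [NormedSpace ℝ X]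
  [NormedAddCommGroup Y] [NormedSpace ℝ Y]

namespace MLY

lemma mavg_eq (T : ℕ → X →L[ℝ] X) (x y : X) : mavg T x y = avg T (x - y) := by
  funext n; simp [mavg, avg, map_sub]

lemma msup_eq (T : ℕ → X →L[ℝ] X) (x y : X) : msup T x y = asup T (x - y) := by
  simp [msup, asup, mavg_eq]

lemma minf_eq (T : ℕ → X →L[ℝ] X) (x y : X) : minf T x y = ainf T (x - y) := by
  simp [minf, ainf, mavg_eq]

lemma avg_nonneg (T : ℕ → X →L[ℝ] X) (x : X) (n : ℕ) : 0 ≤ avg T x n := by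
  unfold avg; positivity

lemma avg_neg (T : ℕ → X →L[ℝ] X) (x : X) : avg T (-x) = avg T x := by
  funext n; simp [avg]

lemma avg_add_le (T : ℕ → X →L[ℝ] X) (x y : X) (n : ℕ) :
    avg T (x + y) n ≤ avg T x n + avg T y n := by
  unfold avg
  rw [← add_div, ← Finset.sum_add_distrib]
  gcongr with i hi
  rw [map_add]; exact norm_add_le _ _

lemma avg_smul (T : ℕ → X →L[ℝ] X) (c : ℝ) (x : X) (n : ℕ) :
    avg T (c • x) n = |c| * avg T x n := by
  unfold avg
  simp only [map_smul, norm_smul, Real.norm_eq_abs, ← Finset.mul_sum]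
  ring

lemma avg_cont (T : ℕ → X →L[ℝ] X) (n : ℕ) : Continuous fun x => avg T x n := by
  unfold avg; fun_prop

lemma ainf_iff (T : ℕ → X →L[ℝ] X) (x : X) :
    ainf T x = 0 ↔ ∀ k N : ℕ, ∃ n, N ≤ n ∧ avg T x n < 1 / ((k : ℝ) + 1) := by
  constructor
  · intro h k N
    have h1 : ainf T x < ((1 / ((k : ℝ) + 1) : ℝ) : EReal) := by
      rw [h]; exact_mod_cast Nat.one_div_pos_of_nat
    have := frequently_lt_of_liminf_lt (by isBoundedDefault) h1
    obtain ⟨n, hn, h2⟩ := (frequently_atTop.1 this) N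
    exact ⟨n, hn, by exact_mod_cast h2⟩
  · intro h
    apply le_antisymm
    · apply le_of_forall_gt
      intro c hc
      obtain ⟨r, hr0, hrc⟩ := EReal.lt_iff_exists_real_btwn.1 hc
      have hr0' : (0 : ℝ) < r := by exact_mod_cast hr0
      obtain ⟨k, hk⟩ := exists_nat_one_div_lt hr0'
      refine lt_of_le_of_lt ?_ hrc
      apply liminf_le_of_frequently_le
      · rw [frequently_atTop]
        intro N
        obtain ⟨n, hn, h2⟩ := h k N
        exact ⟨n, hn, by exact_mod_cast (h2.trans hk).le⟩
      · isBoundedDefault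
    · apply le_liminf_of_le
      · isBoundedDefault
      · exact Eventually.of_forall fun n => by exact_mod_cast avg_nonneg T x n

lemma asup_top_iff (T : ℕ → X →L[ℝ] X) (x : X) :
    asup T x = ⊤ ↔ ∀ k N : ℕ, ∃ n, N ≤ n ∧ (k : ℝ) < avg T x n := by
  constructor
  · intro h k N
    have h1 : ((k : ℝ) : EReal) < asup T x := by
      rw [h]; exact EReal.coe_lt_top _
    have := frequently_lt_of_lt_limsup (by isBoundedDefault) h1
    obtain ⟨n, hn, h2⟩ := (frequently_atTop.1 this) N
    exact ⟨n, hn, by exact_mod_cast h2⟩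
  · intro h
    rw [EReal.eq_top_iff_forall_lt]
    intro r
    obtain ⟨k, hk⟩ := exists_nat_gt r
    have : ((k : ℝ) : EReal) ≤ asup T x := by
      apply le_limsup_of_frequently_le
      · rw [frequently_atTop]
        intro N
        obtain ⟨n, hn, h2⟩ := h k N
        exact ⟨n, hn, by exact_mod_cast h2.le⟩
      · isBoundedDefault
    exact lt_of_lt_of_le (by exact_mod_cast hk) this

lemma asup_pos (T : ℕ → X →L[ℝ] X) (x : X) (h : 0 < asup T x) :
    ∃ ε : ℝ, 0 < ε ∧ ∀ N : ℕ, ∃ n, N ≤ n ∧ ε < avg T x n := by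
  obtain ⟨r, hr0, hrc⟩ := EReal.lt_iff_exists_real_btwn.1 h
  refine ⟨r, by exact_mod_cast hr0, fun N => ?_⟩
  have := frequently_lt_of_lt_limsup (by isBoundedDefault) hrc
  obtain ⟨n, hn, h2⟩ := (frequently_atTop.1 this) N
  exact ⟨n, hn, by exact_mod_cast h2⟩

lemma sum_shift (f : ℕ → ℝ) (m n : ℕ) :
    ∑ i ∈ Finset.Icc 1 (n + m), f i
      = ∑ i ∈ Finset.Icc 1 m, f i + ∑ i ∈ Finset.Icc 1 n, f (i + m) := by
  induction n with
  | zero => simp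
  | succ n ih =>
    rw [Finset.sum_Icc_succ_top (by omega), show n + 1 + m = (n + m) + 1 by ring,
      Finset.sum_Icc_succ_top (by omega), ih]
    rw [add_assoc]

/-- Under submultiplicativity, averages are controlled by those of `T m x`. -/
lemma avg_le_shift (T : ℕ → X →L[ℝ] X) {C : ℝ}
    (hC : ∀ z : X, ∀ i m : ℕ, 1 ≤ i → 1 ≤ m → ‖T (i + m) z‖ ≤ C * ‖T i (T m z)‖)
    (x : X) (m : ℕ) (hm : 1 ≤ m) (n : ℕ) :
    avg T x n ≤ (∑ i ∈ Finset.Icc 1 m, ‖T i x‖) / n + C * avg T (T m x) n := by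
  unfold avg
  rw [mul_div_assoc', ← add_div]
  gcongr
  calc ∑ i ∈ Finset.Icc 1 n, ‖T i x‖ ≤ ∑ i ∈ Finset.Icc 1 (n + m), ‖T i x‖ := by
        apply Finset.sum_le_sum_of_subset_of_nonneg
        · exact Finset.Icc_subset_Icc le_rfl (by omega)
        · intros; positivity
    _ = _ := sum_shift (fun i => ‖T i x‖) m n
    _ ≤ _ := by
        rw [Finset.mul_sum]
        gcongr with i hi
        exact hC x i m (Finset.mem_Icc.1 hi).1 hm

lemma exists_small (T : ℕ → X →L[ℝ] X) (x : X) (h : ainf T x = 0) {ε : ℝ} (hε : 0 < ε) :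
    ∃ m, 1 ≤ m ∧ ‖T m x‖ < ε := by
  obtain ⟨k, hk⟩ := exists_nat_one_div_lt hε
  obtain ⟨n, hn, h2⟩ := (ainf_iff T x).1 h k 1
  by_contra! hcon
  have hn0 : (0 : ℝ) < n := by exact_mod_cast hn
  have h3 : avg T x n < ε := h2.trans hk
  unfold avg at h3
  rw [div_lt_iff₀ hn0] at h3
  have : ∑ i ∈ Finset.Icc 1 n, ε ≤ ∑ i ∈ Finset.Icc 1 n, ‖T i x‖ :=
    Finset.sum_le_sum fun i hi => hcon i (Finset.mem_Icc.1 hi).1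
  simp at this
  linarith

lemma key (T : ℕ → X →L[ℝ] X) (hsub : Submultiplicative T)
    (hd : Dense {x : X | ainf T x = 0}) (N : ℕ) (L : ℝ) (hL : 0 < L)
    (hb : ∀ n, N ≤ n → ∀ z, avg T z n ≤ L * ‖z‖) (x : X) : ¬ 0 < asup T x := by
  intro hx
  obtain ⟨ε, hε, hf⟩ := asup_pos T x hx
  obtain ⟨C, hC0, hC⟩ := hsub
  obtain ⟨y, hy, hxy⟩ := hd.exists_dist_lt x (show 0 < ε / (3 * L) by positivity)
  obtain ⟨m, hm, hmy⟩ := exists_small T y hy (show 0 < ε / (3 * (C * L)) by positivity)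
  obtain ⟨M, hM⟩ := exists_nat_gt ((∑ i ∈ Finset.Icc 1 m, ‖T i y‖) / (ε / 3))
  obtain ⟨n, hn, hlt⟩ := hf (max N (M + 1))
  have hN : N ≤ n := (le_max_left _ _).trans hn
  have hMn : M + 1 ≤ n := (le_max_right _ _).trans hn
  have hn0 : (0 : ℝ) < n := by exact_mod_cast (show 0 < n by omega)
  have hMn' : (M : ℝ) ≤ n := by exact_mod_cast (show M ≤ n by omega)
  have h1 : avg T x n ≤ avg T (x - y) n + avg T y n := by
    simpa using avg_add_le T (x - y) y n
  have h2 : avg T (x - y) n ≤ ε / 3 := by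
    refine (hb n hN _).trans ?_
    rw [dist_eq_norm, lt_div_iff₀ (by positivity)] at hxy
    linarith
  have h3 := avg_le_shift T hC y m hm n
  have h4 : C * avg T (T m y) n ≤ ε / 3 := by
    have := mul_le_mul_of_nonneg_left (hb n hN (T m y)) hC0.le
    rw [lt_div_iff₀ (by positivity)] at hmy
    linarith
  have h5 : (∑ i ∈ Finset.Icc 1 m, ‖T i y‖) / n ≤ ε / 3 := by
    rw [div_lt_iff₀ (by positivity)] at hM
    rw [div_le_iff₀ hn0]
    nlinarith
  linarith

/-- If the set of vectors with some late average above `k` is not dense, averages are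
uniformly bounded. -/
lemma bound_of_not_dense (T : ℕ → X →L[ℝ] X) (k N : ℕ)
    (h : ¬ Dense {x : X | ∃ n, N ≤ n ∧ (k : ℝ) < avg T x n}) :
    ∃ L : ℝ, 0 < L ∧ ∀ n, N ≤ n → ∀ z, avg T z n ≤ L * ‖z‖ := by
  rw [Metric.dense_iff] at h
  push Not at h
  obtain ⟨x, r, hr, he⟩ := h
  have hball : ∀ y, ‖y - x‖ < r → ∀ n, N ≤ n → avg T y n ≤ k := by
    intro y hy n hn
    by_contra! hlt
    have : y ∈ Metric.ball x r ∩ {x : X | ∃ n, N ≤ n ∧ (k : ℝ) < avg T x n} :=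
      ⟨by simpa [dist_eq_norm] using hy, n, hn, hlt⟩
    rw [he] at this
    exact this
  refine ⟨(2 * k + 1) * (2 / r), by positivity, fun n hn z => ?_⟩
  by_cases hz : z = 0
  · subst hz; simp [avg]
  have hz0 : 0 < ‖z‖ := norm_pos_iff.2 hz
  set c : ℝ := r / 2 / ‖z‖ with hc
  have hc0 : 0 < c := by positivity
  have hcz : ‖c • z‖ < r := by
    rw [norm_smul, Real.norm_eq_abs, abs_of_pos hc0, hc, div_mul_cancel₀ _ hz0.ne']
    linarith
  have h1 := hball (x + c • z) (by simpa using hcz) n hn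
  have h2 := hball x (by simpa using hr) n hn
  have h3 : avg T (c • z) n ≤ avg T (x + c • z) n + avg T x n := by
    have := avg_add_le T (x + c • z) (-x) n
    rw [avg_neg] at this
    simpa using this
  rw [avg_smul, abs_of_pos hc0] at h3
  have h4 : c * avg T z n ≤ 2 * k + 1 := by linarith
  have h5 : avg T z n ≤ (2 * k + 1) / c := by
    rw [le_div_iff₀ hc0]; linarith
  refine h5.trans (le_of_eq ?_)
  rw [hc]; field_simp

lemma residual_of_dense (T : ℕ → X →L[ℝ] X) (hsub : Submultiplicative T)
    (hd : Dense {x : X | ainf T x = 0}) (hx : ∃ x : X, 0 < asup T x) :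
    {x : X | ainf T x = 0 ∧ asup T x = ⊤} ∈ residual X := by
  have h1 : ∀ k N : ℕ, {x : X | ∃ n, N ≤ n ∧ avg T x n < 1 / ((k : ℝ) + 1)} ∈ residual X := by
    intro k N
    apply residual_of_dense_open
    · have : {x : X | ∃ n, N ≤ n ∧ avg T x n < 1 / ((k : ℝ) + 1)}
          = ⋃ n, ⋃ (_ : N ≤ n), {x | avg T x n < 1 / ((k : ℝ) + 1)} := by ext; simp
      rw [this]
      exact isOpen_iUnion fun n => isOpen_iUnion fun _ =>
        isOpen_lt (avg_cont T n) continuous_const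
    · exact hd.mono fun x hx => (ainf_iff T x).1 hx k N
  have h2 : ∀ k N : ℕ, {x : X | ∃ n, N ≤ n ∧ (k : ℝ) < avg T x n} ∈ residual X := by
    intro k N
    apply residual_of_dense_open
    · have : {x : X | ∃ n, N ≤ n ∧ (k : ℝ) < avg T x n}
          = ⋃ n, ⋃ (_ : N ≤ n), {x | (k : ℝ) < avg T x n} := by ext; simp
      rw [this]
      exact isOpen_iUnion fun n => isOpen_iUnion fun _ =>
        isOpen_lt continuous_const (avg_cont T n)
    · by_contra hnd
      obtain ⟨L, hL, hb⟩ := bound_of_not_dense T k N hnd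
      obtain ⟨x, hx⟩ := hx
      exact key T hsub hd N L hL hb x hx
  have h3 := eventually_countable_forall.2 fun k => eventually_countable_forall.2 fun N => h1 k N
  have h4 := eventually_countable_forall.2 fun k => eventually_countable_forall.2 fun N => h2 k N
  filter_upwards [h3, h4] with x hx1 hx2
  exact ⟨(ainf_iff T x).2 hx1, (asup_top_iff T x).2 hx2⟩

lemma translate_residual [CompleteSpace X] {R : Set X} (hR : R ∈ residual X) (a : X) :
    {x : X | x - a ∈ R} ∈ residual X := by
  rw [mem_residual] at hR ⊢
  obtain ⟨t, htR, hG, hD⟩ := hR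
  refine ⟨(fun x => x - a) ⁻¹' t, fun x hx => htR hx, ?_, ?_⟩
  · exact hG.preimage (by fun_prop)
  · exact hD.preimage (Homeomorph.subRight a).isOpenMap

lemma exists_in_all [CompleteSpace X] {R : Set X} (hR : R ∈ residual X) {S : Set X}
    (hS : S.Countable) {U : Set X} (hU : IsOpen U) (hne : U.Nonempty) :
    ∃ x ∈ U, ∀ a ∈ S, x - a ∈ R := by
  have h : {x : X | ∀ a ∈ S, x - a ∈ R} ∈ residual X := by
    have := (eventually_countable_ball hS (l := residual X)
      (p := fun x a _ => x - a ∈ R)).2 fun a _ => translate_residual hR a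
    exact this
  obtain ⟨x, hx, hxU⟩ := (dense_of_mem_residual h).exists_mem_open hU hne
  exact ⟨x, hxU, hx⟩

/-- Symmetric residual sets contain all nonzero differences of a dense uncountable set. -/
lemma exists_K [CompleteSpace X] [TopologicalSpace.SeparableSpace X] {R : Set X}
    (hR : R ∈ residual X) (h0 : (0 : X) ∉ R) (hneg : ∀ x ∈ R, -x ∈ R) :
    ∃ K : Set X, Dense K ∧ ¬ K.Countable ∧ ∀ x ∈ K, ∀ y ∈ K, x ≠ y → x - y ∈ R := by
  have : SecondCountableTopology X := UniformSpace.secondCountable_of_separable X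
  let P : Set X → Prop := fun K => ∀ x ∈ K, ∀ y ∈ K, x ≠ y → x - y ∈ R
  have ext1 : ∀ (K : Set X) (x : X), P K → (∀ a ∈ K, x - a ∈ R) → P (insert x K) := by
    intro K x hK hx y hy z hz hyz
    rcases hy with rfl | hy <;> rcases hz with rfl | hz
    · exact absurd rfl hyz
    · exact hx z hz
    · simpa using hneg _ (hx y hy)
    · exact hK y hy z hz hyz
  -- the countable dense start
  obtain ⟨K0, hK0d, hK0⟩ : ∃ K : Set X, Dense K ∧ P K := by
    obtain ⟨u, hu⟩ := TopologicalSpace.exists_dense_seq X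
    have step : ∀ (S : Finset X) (n : ℕ), ∃ x ∈ Metric.ball (u n.unpair.1) (1 / ((n.unpair.2 : ℝ) + 1)),
        ∀ a ∈ S, x - a ∈ R := fun S n => by
      simpa using exists_in_all hR S.countable_toSet Metric.isOpen_ball
        (Metric.nonempty_ball.2 (Nat.one_div_pos_of_nat (α := ℝ) (n := n.unpair.2)))
    choose f hf1 hf2 using step
    classical
    let A : ℕ → Finset X := fun n => Nat.rec ∅ (fun n S => insert (f S n) S) n
    have hA : ∀ n, A (n + 1) = insert (f (A n) n) (A n) := fun n => rfl
    have hmono : Monotone A := monotone_nat_of_le_succ fun n => by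
      rw [hA]; exact Finset.subset_insert _ _
    have hP : ∀ n : ℕ, P (SetLike.coe (A n)) := by
      intro n
      induction n with
      | zero => intro x hx; simp [A] at hx
      | succ n ih =>
        rw [hA, Finset.coe_insert]
        exact ext1 _ _ ih (fun a ha => hf2 _ _ a ha)
    refine ⟨⋃ n, SetLike.coe (A n), ?_, ?_⟩
    · rw [Metric.dense_iff]
      intro x r hr
      obtain ⟨k, hk⟩ := exists_nat_one_div_lt (half_pos hr)
      obtain ⟨i, hi⟩ := hu.exists_dist_lt x (half_pos hr)
      refine ⟨f (A (Nat.pair i k)) (Nat.pair i k), ?_, ?_⟩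
      · have := hf1 (A (Nat.pair i k)) (Nat.pair i k)
        simp only [Nat.unpair_pair, Metric.mem_ball] at this
        rw [dist_comm] at hi
        rw [Metric.mem_ball]
        have := dist_triangle (f (A (Nat.pair i k)) (Nat.pair i k)) (u i) x
        linarith
      · refine Set.mem_iUnion.2 ⟨Nat.pair i k + 1, ?_⟩
        rw [hA]; simp
    · intro x hx y hy hxy
      obtain ⟨i, hi⟩ := Set.mem_iUnion.1 hx
      obtain ⟨j, hj⟩ := Set.mem_iUnion.1 hy
      exact hP (max i j) x (hmono (le_max_left _ _) hi) y (hmono (le_max_right _ _) hj) hxy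
  obtain ⟨K, hK0K, hmax⟩ := zorn_subset_nonempty {K | P K} (by
    intro c hc hchain _
    refine ⟨⋃₀ c, ?_, fun s hs => Set.subset_sUnion_of_mem hs⟩
    rintro x ⟨s, hs, hxs⟩ y ⟨t, ht, hyt⟩ hxy
    rcases hchain.total hs ht with hst | hst
    · exact hc ht x (hst hxs) y hyt hxy
    · exact hc hs x hxs y (hst hyt) hxy) K0 hK0
  refine ⟨K, hK0d.mono hK0K, fun hcount => ?_, hmax.prop⟩
  obtain ⟨x, -, hx⟩ := exists_in_all hR hcount isOpen_univ Set.univ_nonempty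
  have hxK : x ∈ K := hmax.le_of_ge (ext1 K x hmax.prop hx) (Set.subset_insert _ _)
    (Set.mem_insert _ _)
  exact h0 (by simpa using hx x hxK)

lemma dense_diff {R : Set X} (h : Dense {p : X × X | p.1 - p.2 ∈ R}) : Dense R := by
  have hs : Function.Surjective (fun p : X × X => p.1 - p.2) := fun x => ⟨(x, 0), by simp⟩
  have := hs.denseRange.dense_image (by fun_prop) h
  refine this.mono ?_
  rintro _ ⟨p, hp, rfl⟩
  exact hp

lemma dense_pairs {R : Set X} (h : Dense R) : Dense {p : X × X | p.1 - p.2 ∈ R} := by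
  have := (h.prod (dense_univ (X := X)))
  have hs : Function.Surjective (fun p : X × X => (p.1 + p.2, p.2)) := fun p =>
    ⟨(p.1 - p.2, p.2), by simp⟩
  refine (hs.denseRange.dense_image (by fun_prop) this).mono ?_
  rintro _ ⟨p, hp, rfl⟩
  simpa using hp.1

end MLY

/-- **Characterizations of dense mean Li-Yorke chaos** for a submultiplicative
sequence of bounded linear operators on a separable Banach space. -/
theorem denselyMeanLiYorkeChaotic_tfae_of_submultiplicative
    [CompleteSpace X] [TopologicalSpace.SeparableSpace X]
    (T : ℕ → X →L[ℝ] X) (hsub : Submultiplicative T) :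
    List.TFAE [
      ∃ K : Set X, Dense K ∧ ¬ K.Countable ∧
        ∀ x ∈ K, ∀ y ∈ K, x ≠ y → (minf T x y = 0 ∧ 0 < msup T x y),
      Dense {p : X × X | minf T p.1 p.2 = 0 ∧ 0 < msup T p.1 p.2},
      Dense {x : X | ainf T x = 0 ∧ 0 < asup T x},
      {x : X | ainf T x = 0 ∧ asup T x = ⊤} ∈ residual X,
      Dense {p : X × X | minf T p.1 p.2 = 0} ∧ MeanSensitive T,
      Dense {x : X | ainf T x = 0} ∧ ∃ x : X, 0 < asup T x] := by
  simp only [MeanSensitive, MLY.minf_eq, MLY.msup_eq]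
  tfae_have 1 → 2 := by
    rintro ⟨K, hd, hc, hK⟩
    have hnt : Nontrivial X := by
      by_contra hn
      rw [not_nontrivial_iff_subsingleton] at hn
      exact hc (Set.subsingleton_of_subsingleton.countable)
    rw [dense_iff_inter_open]
    intro U hU ⟨p, hp⟩
    obtain ⟨V, W, hV, hW, hpV, hpW, hVW⟩ := isOpen_prod_iff.1 hU p.1 p.2 hp
    obtain ⟨x, hx, hxV⟩ := hd.exists_mem_open hV ⟨_, hpV⟩
    have : (𝓝[≠] x).NeBot := Module.punctured_nhds_neBot ℝ X x
    obtain ⟨y, ⟨hy, hyx⟩, hyW⟩ := (hd.sdiff_singleton x).exists_mem_open hW ⟨_, hpW⟩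
    exact ⟨(x, y), hVW ⟨hxV, hyW⟩, hK x hx y hy (fun h => hyx h.symm)⟩
  tfae_have 2 → 3 := fun h => MLY.dense_diff (R := {x : X | ainf T x = 0 ∧ 0 < asup T x}) h
  tfae_have 3 → 6 := by
    intro h
    obtain ⟨x, hx⟩ := h.nonempty
    exact ⟨h.mono fun x hx => hx.1, x, hx.2⟩
  tfae_have 6 → 4 := fun h => MLY.residual_of_dense T hsub h.1 h.2
  tfae_have 4 → 1 := by
    intro h
    obtain ⟨K, h1, h2, h3⟩ := MLY.exists_K h
      (by
        rintro ⟨-, h⟩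
        obtain ⟨n, -, hn⟩ := (MLY.asup_top_iff T 0).1 h 0 0
        simp [avg] at hn)
      (by
        rintro x ⟨hx1, hx2⟩
        constructor
        · simpa [ainf, MLY.avg_neg] using hx1
        · simpa [asup, MLY.avg_neg] using hx2)
    refine ⟨K, h1, h2, fun x hx y hy hxy => ?_⟩
    have := h3 x hx y hy hxy
    exact ⟨this.1, by rw [this.2]; exact EReal.zero_lt_top⟩
  tfae_have 4 → 5 := by
    intro h
    have hd := dense_of_mem_residual h
    refine ⟨MLY.dense_pairs (R := {x : X | ainf T x = 0}) (hd.mono fun x hx => hx.1),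
      1, one_pos, fun x ε hε => ?_⟩
    obtain ⟨r, hr, hlt⟩ := hd.exists_dist_lt (0 : X) hε
    refine ⟨x - r, by simpa [dist_eq_norm] using hlt, ?_⟩
    rw [sub_sub_cancel, hr.2]
    exact EReal.coe_lt_top _
  tfae_have 5 → 6 := by
    rintro ⟨h1, δ, hδ, h2⟩
    obtain ⟨y, -, hy⟩ := h2 0 1 one_pos
    exact ⟨MLY.dense_diff (R := {x : X | ainf T x = 0}) h1, _,
      lt_trans (by exact_mod_cast hδ) hy⟩
  tfae_finish
end
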